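/- Let m ≥ 4 be even and let f₆(x) = x + x^{2^{m/2}} + x^{2^m − 2^{m/2} + 1}; let s_t = Tr(f₆(α^t + 1)). Then the linear span is L_s = m(2^{m/2+1} − 2)/3 if m ≡ 0 (mod 4), and L_s = m(2^{m/2+1} − 4)/3 if m ≡ 2 (mod 4); consequently the binary cyclic code C_s has length 2^m − 1 and 𝔽₂-dimension 2^m − 1 − L_s, and the minimum distance satisfies 2^{(m−2)/2} ≤ d(C_s) ≤ L_s + 1. -/

import Mathlib

open Polynomial
open scoped Classical

/-- The polynomial S(x) = ∑_{t=0}^{v−1} s_t x^t ∈ 𝔽₂[x], where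
    s_t = Tr(f(α^t + 1)) and v = 2^m − 1. -/
noncomputable def traceSeqPoly (m : ℕ) (α : GaloisField 2 m)
    (f : GaloisField 2 m → GaloisField 2 m) : Polynomial (ZMod 2) :=
  ∑ t ∈ Finset.range (2 ^ m - 1),
    C (Algebra.trace (ZMod 2) (GaloisField 2 m) (f (α ^ t + 1))) * X ^ t

/-- The minimal polynomial of the sequence:
    g_s(x) = (x^v − 1)/gcd(x^v − 1, S(x)). Its degree is the linear span L_s. -/
noncomputable def genPoly (m : ℕ) (α : GaloisField 2 m)
    (f : GaloisField 2 m → GaloisField 2 m) : Polynomial (ZMod 2) :=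
  (X ^ (2 ^ m - 1) - 1) /
    EuclideanDomain.gcd (X ^ (2 ^ m - 1) - 1) (traceSeqPoly m α f)

/-- The binary cyclic code C_s = {c ∈ 𝔽₂[x] : deg c < v and g_s ∣ c},
    as an 𝔽₂-submodule of 𝔽₂[x]. -/
noncomputable def codeC (m : ℕ) (α : GaloisField 2 m)
    (f : GaloisField 2 m → GaloisField 2 m) :
    Submodule (ZMod 2) (Polynomial (ZMod 2)) :=
  Polynomial.degreeLT (ZMod 2) (2 ^ m - 1) ⊓
    (Ideal.span {genPoly m α f}).restrictScalars (ZMod 2)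

/-- The set of Hamming weights (numbers of nonzero coefficients) of the
    nonzero codewords of a code; the minimum distance is its least element. -/
def wtSet (Cs : Submodule (ZMod 2) (Polynomial (ZMod 2))) : Set ℕ :=
  {w | ∃ c : Polynomial (ZMod 2), c ∈ Cs ∧ c ≠ 0 ∧ c.support.card = w}

/-!
Write `m = 2 * h`. Frobenius invariance of the trace gives `Tr (f₆ x) = Tr (x ^ (2 ^ (h + 1) - 1))`,
and in characteristic two `(y + 1) ^ (2 ^ (h + 1) - 1)` is the sum of all `y ^ b` with
`b < 2 ^ (h + 1)`. The exponents `b` and `2 * b` contribute equal traces, so they cancel in pairs,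
and what survives is `s_t = ∑ z ∈ Z, z ^ t` for the conjugates `z` of the elements `α ^ b`, where
`b` runs over odd exponents in distinct 2-cyclotomic cosets of size `m`. Hence the roots of the
minimal polynomial are the inverses of the elements of `Z`, and counting `Z` gives the linear span.
Every odd `b` strictly between `2 ^ h + 1` and `2 ^ (h + 1)` survives, so the code has
`2 ^ (h - 1) - 1` zeros in geometric progression with ratio `α ^ 2`, and the BCH bound yields the
minimum distance.
-/

section ParityOdds

/-- The odd `b < 2 ^ n` whose binary length has the same parity as `n`. Each odd `b < 2 ^ n` has
`n - b.size + 1` multiples `b * 2 ^ i` below `2 ^ n`, so these are the `b` for which that number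
is odd. -/
def parityOdds (n : ℕ) : Finset ℕ := {b ∈ Finset.range (2 ^ n) | Odd b ∧ Even (b.size + n)}

variable {n b : ℕ}

theorem mem_parityOdds : b ∈ parityOdds n ↔ b < 2 ^ n ∧ Odd b ∧ Even (b.size + n) := by
  simp only [parityOdds, Finset.mem_filter, Finset.mem_range]

theorem parityOdds_zero : parityOdds 0 = ∅ := by
  ext b
  simp +contextual [mem_parityOdds]

theorem mem_parityOdds_of_two_pow_le (hb : Odd b) (hle : 2 ^ n ≤ b) (hlt : b < 2 ^ (n + 1)) :
    b ∈ parityOdds (n + 1) := by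
  have hsize : b.size = n + 1 := (Nat.size_le.2 hlt).antisymm (Nat.lt_size.2 hle)
  exact mem_parityOdds.2 ⟨hlt, hb, hsize ▸ Even.add_self _⟩

theorem parityOdds_succ (n : ℕ) :
    parityOdds (n + 1) = {b ∈ Finset.range (2 ^ (n + 1)) | Odd b} \ parityOdds n := by
  ext b
  simp only [mem_parityOdds, Finset.mem_sdiff, Finset.mem_filter, Finset.mem_range,
    ← Nat.size_le, Nat.even_iff]
  grind

theorem parityOdds_subset_odds_succ (n : ℕ) :
    parityOdds n ⊆ {b ∈ Finset.range (2 ^ (n + 1)) | Odd b} := fun b hb ↦ by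
  have ⟨hlt, hodd, _⟩ := mem_parityOdds.1 hb
  exact Finset.mem_filter.2
    ⟨Finset.mem_range.2 (hlt.trans (Nat.pow_lt_pow_succ one_lt_two)), hodd⟩

theorem sum_range_two_mul_of_apply_two_mul {M : Type*} [AddCommMonoid M] {F : ℕ → M}
    (hF : ∀ b, F (2 * b) = F b) (n : ℕ) :
    ∑ b ∈ Finset.range (2 * n), F b =
      ∑ b ∈ Finset.range n, F b + ∑ b ∈ Finset.range (2 * n) with Odd b, F b := by
  have heven : {b ∈ Finset.range (2 * n) | ¬Odd b} = (Finset.range n).image (2 * ·) := by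
    ext b
    simp only [Finset.mem_filter, Finset.mem_range, Finset.mem_image, Nat.not_odd_iff_even,
      even_iff_exists_two_mul]
    exact ⟨fun ⟨_, k, hk⟩ ↦ ⟨k, by lia, hk.symm⟩, fun ⟨k, hk, hb⟩ ↦ ⟨by lia, k, hb.symm⟩⟩
  rw [← Finset.sum_filter_not_add_sum_filter _ Odd, heven,
    Finset.sum_image (mul_right_injective₀ two_ne_zero).injOn]
  simp only [hF]

theorem card_odds_range_two_mul (n : ℕ) : {b ∈ Finset.range (2 * n) | Odd b}.card = n := by
  have hsum := sum_range_two_mul_of_apply_two_mul (F := fun _ ↦ 1) (fun _ ↦ rfl) n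
  simp only [Finset.sum_const, Finset.card_range, smul_eq_mul, mul_one] at hsum
  lia

theorem three_mul_card_parityOdds (n : ℕ) : (3 * (parityOdds n).card : ℤ) = 2 ^ n - (-1) ^ n := by
  induction n with
  | zero => simp [parityOdds_zero]
  | succ n ih =>
    have hcard := Finset.card_sdiff_add_card_eq_card (parityOdds_subset_odds_succ n)
    rw [← parityOdds_succ, pow_succ', card_odds_range_two_mul] at hcard
    zify at hcard
    rw [pow_succ, pow_succ]
    linarith

theorem sum_range_two_pow_eq_sum_parityOdds {M : Type*} [AddCommMonoid M] {F : ℕ → M}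
    (hM : ∀ x : M, x + x = 0) (hF : ∀ b, F (2 * b) = F b) (n : ℕ) :
    ∑ b ∈ Finset.range (2 ^ n), F b = F 0 + ∑ b ∈ parityOdds n, F b := by
  induction n with
  | zero => simp [parityOdds_zero]
  | succ n ih =>
    calc ∑ b ∈ Finset.range (2 ^ (n + 1)), F b
      _ = ∑ b ∈ Finset.range (2 ^ n), F b + ∑ b ∈ Finset.range (2 ^ (n + 1)) with Odd b, F b := by
        rw [pow_succ', sum_range_two_mul_of_apply_two_mul hF]
      _ = F 0 + ∑ b ∈ parityOdds n, F b +
          (∑ b ∈ parityOdds (n + 1), F b + ∑ b ∈ parityOdds n, F b) := by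
        rw [ih, parityOdds_succ, Finset.sum_sdiff (parityOdds_subset_odds_succ n)]
      _ = F 0 + ∑ b ∈ parityOdds (n + 1), F b := by
        rw [add_add_add_comm, add_assoc, hM, add_zero]

end ParityOdds

section CyclotomicCosets

/-- The exponents `b` with `Tr ((y + 1) ^ (2 ^ (h + 1) - 1)) = ∑ b, Tr (y ^ b)` over
`𝔽_{2 ^ (2 * h)}`: they lie in distinct 2-cyclotomic cosets modulo `2 ^ (2 * h) - 1`, each of full
size `2 * h`. The element `2 ^ h + 1`, whose coset has size `h`, is removed, because
`y ^ (2 ^ h + 1)` has trace zero. -/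
def traceExponents (h : ℕ) : Finset ℕ := (parityOdds (h + 1)).erase (2 ^ h + 1)

variable {h b c i j k n v : ℕ}

theorem odd_of_mem_traceExponents (hb : b ∈ traceExponents h) : Odd b :=
  (mem_parityOdds.1 (Finset.mem_of_mem_erase hb)).2.1

theorem lt_of_mem_traceExponents (hb : b ∈ traceExponents h) : b < 2 ^ (h + 1) :=
  (mem_parityOdds.1 (Finset.mem_of_mem_erase hb)).1

theorem two_pow_add_one_mem_parityOdds (hh : h ≠ 0) : 2 ^ h + 1 ∈ parityOdds (h + 1) :=
  mem_parityOdds_of_two_pow_le ((even_two.pow_of_ne_zero hh).add_one) (Nat.le_succ _) <| by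
    have := Nat.one_lt_two_pow hh
    rw [pow_succ]
    lia

theorem eq_zero_of_odd_modEq_mul_two_pow (hb : Odd b) (hbv : b < v) (hcv : c * 2 ^ k < v)
    (hbc : b ≡ c * 2 ^ k [MOD v]) : k = 0 := by
  by_contra hk
  rw [hbc.eq_of_lt_of_lt hbv hcv] at hb
  exact Nat.not_odd_iff_even.2 ((even_two.pow_of_ne_zero hk).mul_left c) hb

theorem mul_two_pow_modEq_self (a n : ℕ) : a * 2 ^ n ≡ a [MOD 2 ^ n - 1] := by
  have hone : 2 ^ n ≡ 1 [MOD 2 ^ n - 1] :=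
    ((Nat.modEq_iff_dvd' Nat.one_le_two_pow).2 dvd_rfl).symm
  simpa using hone.mul_left a

theorem two_pow_succ_lt_two_pow_two_mul_sub_one (hh : 2 ≤ h) :
    2 ^ (h + 1) < 2 ^ (2 * h) - 1 := by
  have hle : 2 ^ (h + 2) ≤ 2 ^ (2 * h) := Nat.pow_le_pow_right two_pos (by lia)
  have hpos : 1 < 2 ^ h := Nat.one_lt_two_pow (by lia)
  rw [pow_succ] at hle ⊢
  lia

theorem eq_zero_of_modEq_mul_two_pow_of_lt (hb : Odd b) (hbv : b < 2 ^ (2 * h) - 1)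
    (hc : c < 2 ^ (h + 1)) (hk : k < h) (hbc : b ≡ c * 2 ^ k [MOD 2 ^ (2 * h) - 1]) : k = 0 := by
  by_contra hk0
  refine hk0 (eq_zero_of_odd_modEq_mul_two_pow hb hbv ?_ hbc)
  have hle : (c + 1) * 2 ^ k ≤ 2 ^ (2 * h) := calc
    (c + 1) * 2 ^ k ≤ 2 ^ (h + 1) * 2 ^ (h - 1) :=
      Nat.mul_le_mul hc (Nat.pow_le_pow_right two_pos (by lia))
    _ = 2 ^ (2 * h) := by rw [← pow_add]; congr 1; lia
  have hone : 1 < 2 ^ k := Nat.one_lt_two_pow hk0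
  rw [add_one_mul] at hle
  lia

theorem eq_two_pow_add_one_of_modEq_mul_two_pow (hh : 2 ≤ h) (hb : Odd b)
    (hb' : b < 2 ^ (h + 1)) (hc : Odd c) (hc' : c < 2 ^ (h + 1))
    (hbc : b ≡ c * 2 ^ h [MOD 2 ^ (2 * h) - 1]) : b = 2 ^ h + 1 := by
  have hlt := two_pow_succ_lt_two_pow_two_mul_sub_one hh
  have htwo : 2 < 2 ^ h := lt_self_pow₀ one_lt_two hh
  have hsq : 2 ^ (2 * h) = 2 ^ h * 2 ^ h := by rw [two_mul, pow_add]
  have mul_lt {a : ℕ} (ha : a < 2 ^ h) : a * 2 ^ h + 1 < 2 ^ (2 * h) - 1 := by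
    have := Nat.mul_le_mul_right (2 ^ h) (Nat.succ_le_of_lt ha)
    rw [Nat.succ_mul] at this
    lia
  obtain hch | hch := lt_or_ge c (2 ^ h)
  · have := eq_zero_of_odd_modEq_mul_two_pow hb (hb'.trans hlt) (by have := mul_lt hch; lia) hbc
    lia
  obtain ⟨w, rfl⟩ := Nat.exists_eq_add_of_le hch
  rw [pow_succ] at hb' hc' hlt
  have hw : (2 ^ h + w) * 2 ^ h ≡ w * 2 ^ h + 1 [MOD 2 ^ (2 * h) - 1] := by
    simpa [add_mul, hsq, add_comm] using
      (mul_two_pow_modEq_self 1 (2 * h)).add_left (w * 2 ^ h)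
  have hbw : b = w * 2 ^ h + 1 :=
    (hbc.trans hw).eq_of_lt_of_lt (by lia) (mul_lt (by lia))
  have hw_odd : Odd w := by
    rwa [Nat.odd_add', iff_true_right (even_two.pow_of_ne_zero (by lia))] at hc
  have hw_lt : w < 2 := lt_of_mul_lt_mul_right (a := 2 ^ h) (by lia) (Nat.zero_le _)
  obtain rfl : w = 1 := by have := hw_odd.pos; lia
  rwa [one_mul] at hbw

theorem eq_zero_of_mem_traceExponents_of_modEq (hh : 2 ≤ h) (hb : b ∈ traceExponents h)
    (hc : c ∈ traceExponents h) (hk : k < 2 * h)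
    (hbc : b ≡ c * 2 ^ k [MOD 2 ^ (2 * h) - 1]) : k = 0 := by
  have hlt := two_pow_succ_lt_two_pow_two_mul_sub_one hh
  have hb_odd := odd_of_mem_traceExponents hb
  have hb_lt := lt_of_mem_traceExponents hb
  have hc_odd := odd_of_mem_traceExponents hc
  have hc_lt := lt_of_mem_traceExponents hc
  obtain hkh | rfl | hkh := lt_trichotomy k h
  · exact eq_zero_of_modEq_mul_two_pow_of_lt hb_odd (hb_lt.trans hlt) hc_lt hkh hbc
  · exact absurd (eq_two_pow_add_one_of_modEq_mul_two_pow hh hb_odd hb_lt hc_odd hc_lt hbc)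
      (Finset.ne_of_mem_erase hb)
  · have hcb : c ≡ b * 2 ^ (2 * h - k) [MOD 2 ^ (2 * h) - 1] := by
      have hmul := hbc.mul_right (2 ^ (2 * h - k))
      rw [mul_assoc, ← pow_add, Nat.add_sub_cancel' hk.le] at hmul
      exact (hmul.trans (mul_two_pow_modEq_self c _)).symm
    have := eq_zero_of_modEq_mul_two_pow_of_lt hc_odd (hc_lt.trans hlt) hb_lt (by lia) hcb
    lia

theorem coprime_two_pow_sub_one_two_pow (hn : n ≠ 0) (i : ℕ) :
    (2 ^ n - 1).Coprime (2 ^ i) :=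
  (Nat.coprime_two_right.2
    (Nat.Even.sub_odd Nat.one_le_two_pow (even_two.pow_of_ne_zero hn) odd_one)).pow_right i

theorem eq_and_eq_of_mul_two_pow_modEq (hh : 2 ≤ h) (hb : b ∈ traceExponents h)
    (hc : c ∈ traceExponents h) (hi : i < 2 * h) (hj : j < 2 * h)
    (hbc : b * 2 ^ i ≡ c * 2 ^ j [MOD 2 ^ (2 * h) - 1]) : b = c ∧ i = j := by
  wlog hij : i ≤ j generalizing b c i j
  · exact (this hc hb hj hi hbc.symm (le_of_not_ge hij)).imp Eq.symm Eq.symm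
  have hlt := two_pow_succ_lt_two_pow_two_mul_sub_one hh
  obtain ⟨k, rfl⟩ := Nat.exists_eq_add_of_le' hij
  rw [pow_add, ← mul_assoc] at hbc
  replace hbc := Nat.ModEq.cancel_right_of_coprime
    (coprime_two_pow_sub_one_two_pow (by lia) i) hbc
  obtain rfl := eq_zero_of_mem_traceExponents_of_modEq hh hb hc (by lia) hbc
  rw [pow_zero, mul_one] at hbc
  exact ⟨hbc.eq_of_lt_of_lt ((lt_of_mem_traceExponents hb).trans hlt)
    ((lt_of_mem_traceExponents hc).trans hlt), (zero_add i).symm⟩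

end CyclotomicCosets

section Trace

theorem sub_one_pow_char_pow_sub_one {R : Type*} [CommRing R] (p : ℕ) [Fact p.Prime] [CharP R p]
    (y : R) (n : ℕ) : (y - 1) ^ (p ^ n - 1) = ∑ b ∈ Finset.range (p ^ n), y ^ b := by
  have hX : (X - 1 : R[X]) ^ (p ^ n - 1) = ∑ b ∈ Finset.range (p ^ n), X ^ b := by
    refine (monic_X_sub_C (1 : R)).isRegular.right ?_
    simp only [C_1]
    rw [geom_sum_mul, ← pow_succ, Nat.sub_add_cancel (Nat.pow_pos (Fact.out : p.Prime).pos),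
      sub_pow_char_pow, one_pow]
  simpa [eval_finsetSum] using congrArg (eval y) hX

section FiniteExtension

variable {F L : Type*} [Field F] [Field L] [Finite L] [Algebra F L]

theorem trace_pow_natCard_pow (x : L) (k : ℕ) :
    Algebra.trace F L (x ^ Nat.card F ^ k) = Algebra.trace F L x := by
  have := Finite.of_injective _ (algebraMap F L).injective
  have := Fintype.ofFinite F
  induction k with
  | zero => rw [pow_zero, pow_one]
  | succ k ih =>
    rw [pow_succ, pow_mul, ← ih, Nat.card_eq_fintype_card]
    exact Algebra.trace_eq_of_algEquiv (FiniteField.frobeniusAlgEquivOfAlgebraic F L) _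

theorem trace_eq_zero_of_pow_natCard_pow_eq_self [CharP F 2] {h : ℕ}
    (hL : Module.finrank F L = 2 * h) {x : L} (hx : x ^ Nat.card F ^ h = x) :
    Algebra.trace F L x = 0 := by
  have := charP_of_injective_algebraMap (algebraMap F L).injective 2
  refine (algebraMap F L).injective ?_
  rw [FiniteField.algebraMap_trace_eq_sum_pow, hL, two_mul, Finset.sum_range_add, map_zero]
  simp only [pow_add, pow_mul, hx, CharTwo.add_self_eq_zero]

end FiniteExtension

variable {K : Type*} [Field K] [Finite K] [Algebra (ZMod 2) K] {h n : ℕ}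

theorem trace_pow_two_pow (x : K) (k : ℕ) :
    Algebra.trace (ZMod 2) K (x ^ 2 ^ k) = Algebra.trace (ZMod 2) K x := by
  simpa only [Nat.card_zmod] using trace_pow_natCard_pow (F := ZMod 2) x k

theorem pow_two_pow_eq_self (hK : Module.finrank (ZMod 2) K = n) (x : K) : x ^ 2 ^ n = x := by
  have := Fintype.ofFinite K
  rw [← hK, FiniteField.pow_finrank_eq_card, FiniteField.pow_card]

theorem trace_add_pow_add_pow (hK : Module.finrank (ZMod 2) K = 2 * h) (x : K) :
    Algebra.trace (ZMod 2) K (x + x ^ 2 ^ h + x ^ (2 ^ (2 * h) - 2 ^ h + 1)) =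
      Algebra.trace (ZMod 2) K (x ^ (2 ^ (h + 1) - 1)) := by
  have hconj : (x ^ (2 ^ (2 * h) - 2 ^ h + 1)) ^ 2 ^ h = x ^ (2 ^ (h + 1) - 1) := by
    have hexp : (2 ^ (2 * h) - 2 ^ h + 1) * 2 ^ h = 2 ^ (2 * h) * (2 ^ h - 1) + 2 ^ h := by
      rw [two_mul, pow_add, ← Nat.mul_sub_one]
      ring
    have hone : 1 ≤ 2 ^ h := Nat.one_le_two_pow
    rw [← pow_mul, hexp, pow_add, pow_mul, pow_two_pow_eq_self hK, ← pow_add]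
    congr 1
    lia
  rw [map_add, map_add, trace_pow_two_pow, CharTwo.add_self_eq_zero, zero_add,
    ← trace_pow_two_pow _ h, hconj]

theorem trace_add_one_pow_eq_sum_traceExponents (hK : Module.finrank (ZMod 2) K = 2 * h)
    (y : K) :
    Algebra.trace (ZMod 2) K ((y + 1) ^ (2 ^ (h + 1) - 1)) =
      ∑ b ∈ traceExponents h, Algebra.trace (ZMod 2) K (y ^ b) := by
  have := charP_of_injective_algebraMap (algebraMap (ZMod 2) K).injective 2
  have htrace_one : Algebra.trace (ZMod 2) K (y ^ 0) = 0 :=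
    trace_eq_zero_of_pow_natCard_pow_eq_self hK (by rw [pow_zero, one_pow])
  have htrace_norm : Algebra.trace (ZMod 2) K (y ^ (2 ^ h + 1)) = 0 := by
    refine trace_eq_zero_of_pow_natCard_pow_eq_self hK ?_
    rw [Nat.card_zmod, ← pow_mul, add_one_mul, ← pow_add, ← two_mul, pow_add,
      pow_two_pow_eq_self hK, pow_succ']
  have hdouble (b : ℕ) : Algebra.trace (ZMod 2) K (y ^ (2 * b)) =
      Algebra.trace (ZMod 2) K (y ^ b) := by
    simpa only [pow_one, ← pow_mul, mul_comm b] using trace_pow_two_pow (y ^ b) 1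
  rw [← CharTwo.sub_eq_add, sub_one_pow_char_pow_sub_one, map_sum,
    sum_range_two_pow_eq_sum_parityOdds CharTwo.add_self_eq_zero hdouble, htrace_one, zero_add,
    traceExponents]
  exact (Finset.sum_erase (f := fun b ↦ Algebra.trace (ZMod 2) K (y ^ b)) _ htrace_norm).symm

end Trace

section CyclicCode

variable {F K : Type*} [Field F] [Field K] [Algebra F K]

theorem geom_sum_eq_ite_of_pow_eq_one {v : ℕ} {z : K} (hz : z ^ v = 1) :
    ∑ t ∈ Finset.range v, z ^ t = if z = 1 then (v : K) else 0 := by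
  split_ifs with h
  · simp only [h, one_pow, Finset.sum_const, Finset.card_range, nsmul_one]
  · refine (mul_eq_zero.1 ?_).resolve_right (sub_ne_zero.2 h)
    rw [geom_sum_mul, hz, sub_self]

theorem div_gcd_dvd [DecidableEq F] {P : F[X]} (hP : P ≠ 0) (S : F[X]) :
    P / EuclideanDomain.gcd P S ∣ P := by
  have hdvd := EuclideanDomain.gcd_dvd_left P S
  exact Dvd.intro_left _ (EuclideanDomain.mul_div_cancel' (ne_zero_of_dvd_ne_zero hP hdvd) hdvd)

theorem aeval_div_gcd_eq_zero_iff [DecidableEq F] {P S : F[X]} (hP : P.Separable) {x : K} :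
    aeval x (P / EuclideanDomain.gcd P S) = 0 ↔ aeval x P = 0 ∧ aeval x S ≠ 0 := by
  have hdvd := EuclideanDomain.gcd_dvd_left P S
  have hmul : EuclideanDomain.gcd P S * (P / EuclideanDomain.gcd P S) = P :=
    EuclideanDomain.mul_div_cancel' (ne_zero_of_dvd_ne_zero hP.ne_zero hdvd) hdvd
  have hcop : IsCoprime (EuclideanDomain.gcd P S) (P / EuclideanDomain.gcd P S) :=
    (hmul ▸ hP).isCoprime
  have hgcd : aeval x (EuclideanDomain.gcd P S) = 0 ↔ aeval x P = 0 ∧ aeval x S = 0 := by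
    simpa only [IsRoot, eval_map_algebraMap, aeval_def] using
      root_gcd_iff_root_left_right (ϕ := algebraMap F K) (f := P) (g := S) (α := x)
  have hP_iff : aeval x P = 0 ↔ aeval x (EuclideanDomain.gcd P S) = 0 ∨
      aeval x (P / EuclideanDomain.gcd P S) = 0 := by
    rw [← mul_eq_zero, ← map_mul, hmul]
  have hnot : ¬(aeval x (EuclideanDomain.gcd P S) = 0 ∧
      aeval x (P / EuclideanDomain.gcd P S) = 0) := by
    rintro ⟨hg, hq⟩
    have hcop_x := hcop.map (aeval x).toRingHom
    exact not_isCoprime_zero_zero <| by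
      simpa only [AlgHom.toRingHom_eq_coe, RingHom.coe_coe, hg, hq] using hcop_x
  tauto

theorem lt_card_support_of_aeval_mul_pow_eq_zero {N : ℕ} {β γ : K} (hβ : β ≠ 0) {c : F[X]}
    (hc : c ≠ 0) (hdeg : c.degree < orderOf γ) (hroot : ∀ k < N, aeval (β * γ ^ k) c = 0) :
    N < c.support.card := by
  by_contra! hcard
  let e := c.support.equivFin.symm
  have hinj : Function.Injective fun i ↦ γ ^ (e i : ℕ) := by
    have hlt (i) : (e i : ℕ) < orderOf γ := by
      exact_mod_cast (le_degree_of_mem_supp _ (e i).2).trans_lt hdeg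
    exact fun i j hij ↦ e.injective (Subtype.ext (pow_injOn_Iio_orderOf (hlt i) (hlt j) hij))
  have hvandermonde (k : Fin c.support.card) :
      ∑ i, algebraMap F K (c.coeff (e i)) * β ^ (e i : ℕ) * (γ ^ (e i : ℕ)) ^ (k : ℕ) = 0 := by
    have hk := hroot k (k.2.trans_le hcard)
    rw [aeval_def, eval₂_eq_sum, sum_def, ← Finset.sum_coe_sort, ← e.sum_comp] at hk
    simpa only [mul_pow, pow_right_comm γ, mul_assoc] using hk
  have hzero := Matrix.eq_zero_of_forall_pow_sum_mul_pow_eq_zero hinj hvandermonde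
  have hpos : 0 < c.support.card := Finset.card_pos.2 (nonempty_support_iff.2 hc)
  have hcoeff := congrFun hzero ⟨0, hpos⟩
  rw [Pi.zero_apply, mul_eq_zero, map_eq_zero] at hcoeff
  exact hcoeff.elim (mem_support_iff.1 (e ⟨0, hpos⟩).2) (pow_ne_zero _ hβ)

theorem degreeLT_inf_span_eq_map_mulLeft {G : F[X]} (hG : G ≠ 0) (v : ℕ) :
    degreeLT F v ⊓ (Ideal.span {G}).restrictScalars F =
      (degreeLT F (v - G.natDegree)).map (LinearMap.mulLeft F G) := by
  have hdeg (d : F[X]) : (G * d).degree < v ↔ d.degree < (v - G.natDegree : ℕ) := by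
    obtain rfl | hd := eq_or_ne d 0
    · simp [bot_lt_iff_ne_bot]
    · rw [← natDegree_lt_iff_degree_lt (mul_ne_zero hG hd), ← natDegree_lt_iff_degree_lt hd,
        natDegree_mul hG hd]
      lia
  ext c
  simp only [Submodule.mem_inf, Submodule.restrictScalars_mem, Ideal.mem_span_singleton,
    mem_degreeLT, Submodule.mem_map, LinearMap.mulLeft_apply]
  constructor
  · rintro ⟨hc, d, rfl⟩
    exact ⟨d, (hdeg d).1 hc, rfl⟩
  · rintro ⟨d, hd, rfl⟩
    exact ⟨(hdeg d).2 hd, dvd_mul_right _ _⟩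

theorem finrank_degreeLT_inf_span {G : F[X]} (hG : G ≠ 0) (v : ℕ) :
    Module.finrank F ↥(degreeLT F v ⊓ (Ideal.span {G}).restrictScalars F) =
      v - G.natDegree := by
  have hinj : Function.Injective (LinearMap.mulLeft F G) := mul_right_injective₀ hG
  rw [degreeLT_inf_span_eq_map_mulLeft hG, ← (Submodule.equivMapOfInjective _ hinj _).finrank_eq,
    (degreeLTEquiv F _).finrank_eq, Module.finrank_fin_fun]

theorem exists_isLeast_wtSet {Cs : Submodule (ZMod 2) (ZMod 2)[X]} {g : (ZMod 2)[X]} {N : ℕ}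
    (hg : g ∈ Cs) (hg0 : g ≠ 0) (hN : ∀ c ∈ Cs, c ≠ 0 → N ≤ c.support.card) :
    ∃ d, IsLeast (wtSet Cs) d ∧ N ≤ d ∧ d ≤ g.natDegree + 1 := by
  have hw : g.support.card ∈ wtSet Cs := ⟨g, hg, hg0, rfl⟩
  obtain ⟨c, hc, hc0, hcard⟩ := Nat.sInf_mem ⟨_, hw⟩
  exact ⟨sInf (wtSet Cs), ⟨Nat.sInf_mem ⟨_, hw⟩, fun _ ↦ Nat.sInf_le⟩, hcard ▸ hN c hc hc0,
    (Nat.sInf_le hw).trans (card_supp_le_succ_natDegree g)⟩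

end CyclicCode

section Spectrum

variable {K : Type*} [Field K] {h : ℕ} {α : K}

/-- The set `Z` of powers of `α` for which `Tr (f₆ (α ^ t + 1)) = ∑ z ∈ Z, z ^ t`, when `α` is
primitive in `𝔽_{2 ^ (2 * h)}`: it consists of the conjugates of the elements `α ^ b` with
`b ∈ traceExponents h`. The roots of the minimal polynomial of the sequence are the inverses of
the elements of `Z`. -/
noncomputable def traceSpectrum (h : ℕ) (α : K) : Finset K :=
  (traceExponents h ×ˢ Finset.range (2 * h)).image fun p ↦ α ^ (p.1 * 2 ^ p.2)

theorem mem_traceSpectrum {z : K} :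
    z ∈ traceSpectrum h α ↔
      ∃ b ∈ traceExponents h, ∃ i < 2 * h, α ^ (b * 2 ^ i) = z := by
  simp only [traceSpectrum, Finset.mem_image, Finset.mem_product, Finset.mem_range, Prod.exists]
  grind

theorem isOfFinOrder_of_orderOf_eq_two_pow_sub_one {M : Type*} [Monoid M] {a : M} {n : ℕ}
    (hn : n ≠ 0) (ha : orderOf a = 2 ^ n - 1) : IsOfFinOrder a := by
  have := Nat.one_lt_two_pow hn
  exact orderOf_pos_iff.1 (by lia)

theorem injOn_traceSpectrum (hh : 2 ≤ h) (hα : orderOf α = 2 ^ (2 * h) - 1) :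
    Set.InjOn (fun p : ℕ × ℕ ↦ α ^ (p.1 * 2 ^ p.2))
      ↑(traceExponents h ×ˢ Finset.range (2 * h)) := by
  rintro ⟨b, i⟩ hbi ⟨c, j⟩ hcj heq
  simp only [Finset.mem_coe, Finset.mem_product, Finset.mem_range] at hbi hcj
  have hmod := (isOfFinOrder_of_orderOf_eq_two_pow_sub_one (by lia) hα).pow_eq_pow_iff_modEq.1 heq
  rw [hα] at hmod
  exact Prod.ext_iff.2 (eq_and_eq_of_mul_two_pow_modEq hh hbi.1 hcj.1 hbi.2 hcj.2 hmod)

theorem card_traceSpectrum (hh : 2 ≤ h) (hα : orderOf α = 2 ^ (2 * h) - 1) :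
    (traceSpectrum h α).card = 2 * h * ((parityOdds (h + 1)).card - 1) := by
  rw [traceSpectrum, Finset.card_image_of_injOn (injOn_traceSpectrum hh hα),
    Finset.card_product, Finset.card_range, mul_comm, traceExponents,
    Finset.card_erase_of_mem (two_pow_add_one_mem_parityOdds (by lia))]

theorem three_mul_card_traceSpectrum_of_even (hh : 2 ≤ h) (hα : orderOf α = 2 ^ (2 * h) - 1)
    (hh_even : Even h) : 3 * (traceSpectrum h α).card = 2 * h * (2 ^ (h + 1) - 2) := by
  have hcard := three_mul_card_parityOdds (h + 1)
  rw [hh_even.add_one.neg_one_pow] at hcard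
  rw [card_traceSpectrum hh hα, mul_left_comm]
  congr 1
  zify
  lia

theorem three_mul_card_traceSpectrum_of_odd (hh : 2 ≤ h) (hα : orderOf α = 2 ^ (2 * h) - 1)
    (hh_odd : Odd h) : 3 * (traceSpectrum h α).card = 2 * h * (2 ^ (h + 1) - 4) := by
  have hcard := three_mul_card_parityOdds (h + 1)
  rw [hh_odd.add_one.neg_one_pow] at hcard
  rw [card_traceSpectrum hh hα, mul_left_comm]
  congr 1
  zify
  lia

theorem zero_notMem_traceSpectrum (hα : α ≠ 0) : 0 ∉ traceSpectrum h α := by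
  rw [mem_traceSpectrum]
  rintro ⟨b, -, i, -, hbi⟩
  exact pow_ne_zero _ hα hbi

theorem one_notMem_traceSpectrum (hh : 2 ≤ h) (hα : orderOf α = 2 ^ (2 * h) - 1) :
    1 ∉ traceSpectrum h α := by
  rw [mem_traceSpectrum]
  rintro ⟨b, hb, i, -, hbi⟩
  have hdvd : 2 ^ (2 * h) - 1 ∣ b := by
    rw [← (coprime_two_pow_sub_one_two_pow (by lia) i).dvd_mul_right, ← hα]
    exact orderOf_dvd_of_pow_eq_one hbi
  have hle := Nat.le_of_dvd (odd_of_mem_traceExponents hb).pos hdvd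
  have := lt_of_mem_traceExponents hb
  have := two_pow_succ_lt_two_pow_two_mul_sub_one hh
  lia

theorem card_traceSpectrum_lt (hh : 2 ≤ h) (hα : orderOf α = 2 ^ (2 * h) - 1) :
    (traceSpectrum h α).card < 2 ^ (2 * h) - 1 := by
  have hprim : IsPrimitiveRoot α (2 ^ (2 * h) - 1) := hα ▸ IsPrimitiveRoot.orderOf α
  have hpos : 0 < 2 ^ (2 * h) - 1 := by
    have := two_pow_succ_lt_two_pow_two_mul_sub_one hh
    lia
  have hmem {z : K} : z ∈ nthRootsFinset (2 ^ (2 * h) - 1) 1 ↔ z ^ (2 ^ (2 * h) - 1) = 1 :=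
    mem_nthRootsFinset hpos 1
  rw [← hprim.card_nthRootsFinset]
  refine Finset.card_lt_card (Finset.ssubset_iff_subset_ne.2 ⟨fun z hz ↦ ?_, fun heq ↦ ?_⟩)
  · obtain ⟨b, -, i, -, rfl⟩ := mem_traceSpectrum.1 hz
    rw [hmem, pow_right_comm, hprim.pow_eq_one, one_pow]
  · exact one_notMem_traceSpectrum hh hα (heq ▸ hmem.2 (one_pow _))

theorem algebraMap_trace_eq_sum_traceSpectrum [Finite K] [Algebra (ZMod 2) K] (hh : 2 ≤ h)
    (hK : Module.finrank (ZMod 2) K = 2 * h) (hα : orderOf α = 2 ^ (2 * h) - 1) (t : ℕ) :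
    algebraMap (ZMod 2) K (Algebra.trace (ZMod 2) K ((α ^ t + 1) + (α ^ t + 1) ^ 2 ^ h +
      (α ^ t + 1) ^ (2 ^ (2 * h) - 2 ^ h + 1))) = ∑ z ∈ traceSpectrum h α, z ^ t := by
  rw [trace_add_pow_add_pow hK, trace_add_one_pow_eq_sum_traceExponents hK, map_sum,
    traceSpectrum, Finset.sum_image (injOn_traceSpectrum hh hα), Finset.sum_product]
  refine Finset.sum_congr rfl fun b _ ↦ ?_
  rw [FiniteField.algebraMap_trace_eq_sum_pow, hK, Nat.card_zmod]
  refine Finset.sum_congr rfl fun i _ ↦ ?_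
  rw [← pow_mul, ← pow_mul, ← pow_mul]
  congr 1
  ring

theorem inv_mul_pow_mem_traceSpectrum {k : ℕ} (hα : α ≠ 0) (hh : h ≠ 0)
    (hk : k < 2 ^ (h - 1) - 1) :
    ((α ^ (2 ^ (h + 1) - 1))⁻¹ * (α ^ 2) ^ k)⁻¹ ∈ traceSpectrum h α := by
  have htwo : 2 ^ h = 2 * 2 ^ (h - 1) := by rw [← pow_succ', Nat.sub_add_cancel (by lia)]
  have hexp : 2 * k + (2 ^ (h + 1) - 1 - 2 * k) = 2 ^ (h + 1) - 1 := by rw [pow_succ]; lia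
  refine mem_traceSpectrum.2 ⟨2 ^ (h + 1) - 1 - 2 * k, ?_, 0, by lia, ?_⟩
  · refine Finset.mem_erase.2 ⟨?_, mem_parityOdds_of_two_pow_le ?_ ?_ ?_⟩
    all_goals rw [pow_succ]
    any_goals lia
    exact ⟨2 ^ h - 1 - k, by lia⟩
  · rw [pow_zero, mul_one, mul_inv_rev, inv_inv, ← pow_mul,
      eq_inv_mul_iff_mul_eq₀ (pow_ne_zero _ hα), ← pow_add, hexp]

theorem two_pow_le_card_support_of_traceSpectrum {F : Type*} [Field F] [Algebra F K] (hh : 2 ≤ h)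
    (hα : orderOf α = 2 ^ (2 * h) - 1) {c : F[X]} (hc : c ≠ 0)
    (hdeg : c.degree < (2 ^ (2 * h) - 1 : ℕ))
    (hroot : ∀ x, x⁻¹ ∈ traceSpectrum h α → aeval x c = 0) : 2 ^ (h - 1) ≤ c.support.card := by
  have hα0 := (isOfFinOrder_of_orderOf_eq_two_pow_sub_one (by lia) hα).isUnit.ne_zero
  have horder : orderOf (α ^ 2) = 2 ^ (2 * h) - 1 := by
    rw [Nat.Coprime.orderOf_pow, hα]
    simpa only [hα, pow_one] using coprime_two_pow_sub_one_two_pow (by lia : 2 * h ≠ 0) 1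
  have hlt : 2 ^ (h - 1) - 1 < c.support.card :=
    lt_card_support_of_aeval_mul_pow_eq_zero (inv_ne_zero (pow_ne_zero _ hα0)) hc
      (horder ▸ hdeg) fun k hk ↦ hroot _ (inv_mul_pow_mem_traceSpectrum hα0 (by lia) hk)
  lia

end Spectrum

section MinimalPolynomial

theorem splits_map_X_pow_natCard_sub_one_sub_one (p : ℕ) [Fact p.Prime] (K : Type*) [Field K]
    [Finite K] [Algebra (ZMod p) K] :
    ((X ^ (Nat.card K - 1) - 1 : (ZMod p)[X]).map (algebraMap (ZMod p) K)).Splits := by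
  have hdvd : (X ^ (Nat.card K - 1) - 1 : (ZMod p)[X]) ∣ X ^ Nat.card K - X :=
    ⟨X, by rw [sub_mul, ← pow_succ, Nat.sub_add_cancel Nat.card_pos, one_mul]⟩
  have hne : (X ^ Nat.card K - X : (ZMod p)[X]) ≠ 0 :=
    FiniteField.X_pow_card_sub_X_ne_zero _ Finite.one_lt_card
  have hsplits := FiniteField.splits_X_pow_nat_card_sub_X p (K := K)
  exact hsplits.of_dvd (Polynomial.map_ne_zero hne) (map_dvd (algebraMap (ZMod p) K) hdvd)

/-- `Z` is the spectrum of the sequence `s_t = Tr (f (α ^ t + 1))`: its terms, viewed in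
`𝔽_{2 ^ m}`, are the power sums of the nonzero elements `z ∈ Z`. The elements of `Z` are then the
inverses of the roots of the minimal polynomial of the sequence. -/
structure IsSequenceSpectrum (m : ℕ) (α : GaloisField 2 m)
    (f : GaloisField 2 m → GaloisField 2 m) (Z : Finset (GaloisField 2 m)) : Prop where
  zero_notMem : 0 ∉ Z
  algebraMap_trace_eq_sum (t : ℕ) : algebraMap (ZMod 2) (GaloisField 2 m)
    (Algebra.trace (ZMod 2) (GaloisField 2 m) (f (α ^ t + 1))) = ∑ z ∈ Z, z ^ t

variable {m : ℕ} {α : GaloisField 2 m} {f : GaloisField 2 m → GaloisField 2 m}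
  {Z : Finset (GaloisField 2 m)}

theorem pow_two_pow_sub_one_eq_one (hm : m ≠ 0) {x : GaloisField 2 m} (hx : x ≠ 0) :
    x ^ (2 ^ m - 1) = 1 := by
  have := Fintype.ofFinite (GaloisField 2 m)
  rw [← GaloisField.card 2 m hm, Nat.card_eq_fintype_card]
  exact FiniteField.pow_card_sub_one_eq_one x hx

theorem cast_two_pow_sub_one {R : Type*} [Ring R] [CharP R 2] (hm : m ≠ 0) :
    ((2 ^ m - 1 : ℕ) : R) = 1 := by
  rw [Nat.cast_sub Nat.one_le_two_pow, Nat.cast_pow, Nat.cast_two, CharTwo.two_eq_zero,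
    zero_pow hm, Nat.cast_one, zero_sub, CharTwo.neg_eq]

theorem separable_X_pow_two_pow_sub_one (hm : m ≠ 0) :
    (X ^ (2 ^ m - 1) - 1 : (ZMod 2)[X]).Separable := by
  rw [X_pow_sub_one_separable_iff, cast_two_pow_sub_one hm]
  exact one_ne_zero

theorem genPoly_dvd (hm : m ≠ 0) : genPoly m α f ∣ X ^ (2 ^ m - 1) - 1 :=
  div_gcd_dvd (separable_X_pow_two_pow_sub_one hm).ne_zero _

theorem genPoly_ne_zero (hm : m ≠ 0) : genPoly m α f ≠ 0 :=
  ne_zero_of_dvd_ne_zero (separable_X_pow_two_pow_sub_one hm).ne_zero (genPoly_dvd hm)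

theorem aeval_traceSeqPoly (hm : m ≠ 0) (hZ : IsSequenceSpectrum m α f Z)
    {x : GaloisField 2 m} (hx : x ≠ 0) :
    aeval x (traceSeqPoly m α f) = if x⁻¹ ∈ Z then 1 else 0 := by
  calc aeval x (traceSeqPoly m α f)
    _ = ∑ z ∈ Z, ∑ t ∈ Finset.range (2 ^ m - 1), (z * x) ^ t := by
      rw [traceSeqPoly, map_sum, Finset.sum_comm]
      refine Finset.sum_congr rfl fun t _ ↦ ?_
      rw [map_mul, aeval_C, map_pow, aeval_X, hZ.algebraMap_trace_eq_sum, Finset.sum_mul]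
      simp only [mul_pow]
    _ = ∑ z ∈ Z, if x⁻¹ = z then 1 else 0 := by
      refine Finset.sum_congr rfl fun z hz ↦ ?_
      have hzx : z * x ≠ 0 := mul_ne_zero (ne_of_mem_of_not_mem hz hZ.zero_notMem) hx
      rw [geom_sum_eq_ite_of_pow_eq_one (pow_two_pow_sub_one_eq_one hm hzx),
        cast_two_pow_sub_one hm]
      simp only [mul_eq_one_iff_eq_inv₀ hx, eq_comm]
    _ = if x⁻¹ ∈ Z then 1 else 0 := Finset.sum_ite_eq _ _ _

theorem aeval_genPoly_eq_zero_iff (hm : m ≠ 0) (hZ : IsSequenceSpectrum m α f Z)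
    {x : GaloisField 2 m} : aeval x (genPoly m α f) = 0 ↔ x⁻¹ ∈ Z := by
  rw [genPoly, aeval_div_gcd_eq_zero_iff (separable_X_pow_two_pow_sub_one hm)]
  obtain rfl | hx := eq_or_ne x 0
  · simp [hZ.zero_notMem, Nat.sub_eq_zero_iff_le, Nat.one_lt_two_pow hm]
  · rw [aeval_traceSeqPoly hm hZ hx]
    simp [pow_two_pow_sub_one_eq_one hm hx]

theorem natDegree_genPoly (hm : m ≠ 0) (hZ : IsSequenceSpectrum m α f Z) :
    (genPoly m α f).natDegree = Z.card := by
  have hsplits := splits_map_X_pow_natCard_sub_one_sub_one 2 (GaloisField 2 m)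
  rw [GaloisField.card 2 m hm] at hsplits
  replace hsplits := hsplits.of_dvd
    (Polynomial.map_ne_zero (separable_X_pow_two_pow_sub_one hm).ne_zero)
    (map_dvd _ (genPoly_dvd (α := α) (f := f) hm))
  have hroots : (genPoly m α f).rootSet (GaloisField 2 m) = ↑(Z.image (·⁻¹)) := by
    ext x
    rw [mem_rootSet_of_ne (genPoly_ne_zero hm), aeval_genPoly_eq_zero_iff hm hZ]
    simp
  rw [← card_rootSet_eq_natDegree ((separable_X_pow_two_pow_sub_one hm).of_dvd (genPoly_dvd hm))
    hsplits, ← Nat.card_eq_fintype_card, hroots, Nat.card_coe_set_eq, Set.ncard_coe_finset,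
    Finset.card_image_of_injective Z inv_injective]

theorem finrank_codeC (hm : m ≠ 0) :
    Module.finrank (ZMod 2) (codeC m α f) = 2 ^ m - 1 - (genPoly m α f).natDegree :=
  finrank_degreeLT_inf_span (genPoly_ne_zero hm) _

theorem genPoly_mem_codeC (hm : m ≠ 0) (hlt : (genPoly m α f).natDegree < 2 ^ m - 1) :
    genPoly m α f ∈ codeC m α f :=
  ⟨mem_degreeLT.2 ((natDegree_lt_iff_degree_lt (genPoly_ne_zero hm)).1 hlt),
    Ideal.mem_span_singleton_self _⟩

theorem aeval_eq_zero_of_mem_codeC {c : (ZMod 2)[X]} (hc : c ∈ codeC m α f)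
    {x : GaloisField 2 m} (hx : aeval x (genPoly m α f) = 0) : aeval x c = 0 :=
  aeval_eq_zero_of_dvd_aeval_eq_zero (Ideal.mem_span_singleton.1 hc.2) hx

theorem isSequenceSpectrum_traceSpectrum {h : ℕ} (hh : 2 ≤ h) {α : GaloisField 2 (2 * h)}
    (hα : orderOf α = 2 ^ (2 * h) - 1) {f : GaloisField 2 (2 * h) → GaloisField 2 (2 * h)}
    (hf : ∀ x, f x = x + x ^ 2 ^ h + x ^ (2 ^ (2 * h) - 2 ^ h + 1)) :
    IsSequenceSpectrum (2 * h) α f (traceSpectrum h α) where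
  zero_notMem := zero_notMem_traceSpectrum
    (isOfFinOrder_of_orderOf_eq_two_pow_sub_one (by lia) hα).isUnit.ne_zero
  algebraMap_trace_eq_sum t := by
    rw [hf, algebraMap_trace_eq_sum_traceSpectrum hh (GaloisField.finrank 2 (by lia)) hα]

end MinimalPolynomial

/-- Theorem 6: for f₆(x) = x + x^{2^{m/2}} + x^{2^m − 2^{m/2} + 1} over 𝔽_{2^m},
m ≥ 4 even, the linear span is L_s = m(2^{m/2+1} − 2)/3 if m ≡ 0 (mod 4) and
L_s = m(2^{m/2+1} − 4)/3 if m ≡ 2 (mod 4) (stated via 3·L_s = …); the code C_s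
has length 2^m − 1, dimension 2^m − 1 − L_s, and minimum distance d with
2^{(m−2)/2} ≤ d ≤ L_s + 1. -/
theorem stmt15 (m : ℕ) (hm4 : 4 ≤ m) (hme : Even m)
    (α : GaloisField 2 m) (hα : orderOf α = 2 ^ m - 1)
    (f : GaloisField 2 m → GaloisField 2 m)
    (hf : ∀ x, f x = x + x ^ (2 ^ (m / 2)) + x ^ (2 ^ m - 2 ^ (m / 2) + 1)) :
    (m % 4 = 0 →
      3 * (genPoly m α f).natDegree = m * (2 ^ (m / 2 + 1) - 2)) ∧
    (m % 4 = 2 →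
      3 * (genPoly m α f).natDegree = m * (2 ^ (m / 2 + 1) - 4)) ∧
    Module.finrank (ZMod 2) ↥(codeC m α f) =
      2 ^ m - 1 - (genPoly m α f).natDegree ∧
    (∃ d : ℕ, IsLeast (wtSet (codeC m α f)) d ∧
      2 ^ ((m - 2) / 2) ≤ d ∧ d ≤ (genPoly m α f).natDegree + 1) := by
  obtain ⟨h, rfl⟩ := even_iff_exists_two_mul.1 hme
  rw [Nat.mul_div_cancel_left h two_pos] at hf ⊢
  have hh : 2 ≤ h := by lia
  have hm : 2 * h ≠ 0 := by lia
  have hZ := isSequenceSpectrum_traceSpectrum hh hα hf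
  have hdeg := natDegree_genPoly hm hZ
  have hlt : (genPoly (2 * h) α f).natDegree < 2 ^ (2 * h) - 1 := by
    rw [hdeg]
    exact card_traceSpectrum_lt hh hα
  refine ⟨fun hmod ↦ ?_, fun hmod ↦ ?_, finrank_codeC hm,
    exists_isLeast_wtSet (genPoly_mem_codeC hm hlt) (genPoly_ne_zero hm) fun c hc hc0 ↦ ?_⟩
  · rw [hdeg, three_mul_card_traceSpectrum_of_even hh hα (Nat.even_iff.2 (by lia))]
  · rw [hdeg, three_mul_card_traceSpectrum_of_odd hh hα (Nat.odd_iff.2 (by lia))]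
  · rw [show (2 * h - 2) / 2 = h - 1 by lia]
    exact two_pow_le_card_support_of_traceSpectrum hh hα hc0 (mem_degreeLT.1 hc.1) fun x hx ↦
      aeval_eq_zero_of_mem_codeC hc ((aeval_genPoly_eq_zero_iff hm hZ).2 hx)
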